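/- (Baccari–Trad) Let x* be a local minimizer of (NLP) such that MFCQ holds at x* and the rank of the Jacobian matrix J(x*) ∈ ℝ^{(m+q)×n} is m+q−1, where q is the number of active inequality constraints at x*. Then there exists a Lagrange multiplier (λ,μ) ∈ Λ(x*) such that WSOC holds, i.e. dᵀ∇²ₓₓL(x*,λ,μ)d ≥ 0 for all d ∈ S(x*). -/

import Mathlib

open scoped BigOperators Pointwise
open Matrix

attribute [local instance] Classical.propDecidable

noncomputable section

/-- The gradient vector of `φ` at `x` (the vector of partial derivatives). -/
def gradVec {n : ℕ} (φ : (Fin n → ℝ) → ℝ) (x : Fin n → ℝ) : Fin n → ℝ :=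
  fun k => fderiv ℝ φ x (Pi.single k 1)

/-- The quadratic form `d ↦ dᵀ ∇²φ(x) d` of the Hessian of `φ` at `x`. -/
def hessQ {n : ℕ} (φ : (Fin n → ℝ) → ℝ) (x d : Fin n → ℝ) : ℝ :=
  iteratedFDeriv ℝ 2 φ x ![d, d]

/-- Feasibility for the problem (NLP). -/
def Feas {n m p : ℕ} (h : Fin m → (Fin n → ℝ) → ℝ) (g : Fin p → (Fin n → ℝ) → ℝ)
    (x : Fin n → ℝ) : Prop :=
  (∀ i, h i x = 0) ∧ ∀ j, g j x ≤ 0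

/-- The Lagrangian of (NLP). -/
def Lagr {n m p : ℕ} (f : (Fin n → ℝ) → ℝ) (h : Fin m → (Fin n → ℝ) → ℝ)
    (g : Fin p → (Fin n → ℝ) → ℝ) (lam : Fin m → ℝ) (mu : Fin p → ℝ) (x : Fin n → ℝ) : ℝ :=
  f x + ∑ i, lam i * h i x + ∑ j, mu j * g j x

/-- `(lam, mu)` is a Lagrange multiplier at `xs`, i.e. `(lam, mu) ∈ Λ(xs)`. -/
def IsLagMult {n m p : ℕ} (f : (Fin n → ℝ) → ℝ) (h : Fin m → (Fin n → ℝ) → ℝ)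
    (g : Fin p → (Fin n → ℝ) → ℝ) (xs : Fin n → ℝ) (lam : Fin m → ℝ) (mu : Fin p → ℝ) : Prop :=
  (∀ j, 0 ≤ mu j) ∧ fderiv ℝ (Lagr f h g lam mu) xs = 0 ∧ ∀ j, mu j * g j xs = 0

/-- The Mangasarian-Fromovitz constraint qualification at `xs`. -/
def MFCQ {n m p : ℕ} (h : Fin m → (Fin n → ℝ) → ℝ) (g : Fin p → (Fin n → ℝ) → ℝ)
    (xs : Fin n → ℝ) : Prop :=
  LinearIndependent ℝ (fun i : Fin m => fderiv ℝ (h i) xs) ∧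
  ∃ d : Fin n → ℝ, (∀ i, fderiv ℝ (h i) xs d = 0) ∧
    ∀ j, g j xs = 0 → fderiv ℝ (g j) xs d < 0

/-- Membership in the critical cone `C(xs)`. -/
def critCone {n m p : ℕ} (f : (Fin n → ℝ) → ℝ) (h : Fin m → (Fin n → ℝ) → ℝ)
    (g : Fin p → (Fin n → ℝ) → ℝ) (xs d : Fin n → ℝ) : Prop :=
  fderiv ℝ f xs d = 0 ∧ (∀ i, fderiv ℝ (h i) xs d = 0) ∧
    ∀ j, g j xs = 0 → fderiv ℝ (g j) xs d ≤ 0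

/-- Membership in the critical subspace `S(xs)`. -/
def critSub {n m p : ℕ} (h : Fin m → (Fin n → ℝ) → ℝ) (g : Fin p → (Fin n → ℝ) → ℝ)
    (xs d : Fin n → ℝ) : Prop :=
  (∀ i, fderiv ℝ (h i) xs d = 0) ∧ ∀ j, g j xs = 0 → fderiv ℝ (g j) xs d = 0

/-- The Jacobian matrix `J(x)` of equality and active inequality constraints
(activity taken at the base point `xs`). -/
def Jac {n m p : ℕ} (h : Fin m → (Fin n → ℝ) → ℝ) (g : Fin p → (Fin n → ℝ) → ℝ)
    (xs x : Fin n → ℝ) : Matrix (Fin m ⊕ {j : Fin p // g j xs = 0}) (Fin n) ℝ :=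
  Matrix.of fun i k =>
    Sum.elim (fun i' => fderiv ℝ (h i') x (Pi.single k 1))
      (fun j' => fderiv ℝ (g j'.1) x (Pi.single k 1)) i

/-- A first-order cone: the (direct) sum of a linear subspace and a ray. -/
def IsFirstOrderCone {n : ℕ} (K : Set (Fin n → ℝ)) : Prop :=
  ∃ (W : Submodule ℝ (Fin n → ℝ)) (d0 : Fin n → ℝ),
    K = {x | ∃ w ∈ W, ∃ r : ℝ, 0 ≤ r ∧ x = w + r • d0}

/-- The rank of a family of vectors: the dimension of its linear span. -/
def famRank {ι : Type*} {n : ℕ} (v : ι → (Fin n → ℝ)) : ℕ :=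
  Module.finrank ℝ (Submodule.span ℝ (Set.range v))

/-
MFCQ makes the set `Λ` of multipliers compact, and the rank condition makes it collinear, so `Λ`
is contained in a segment with endpoints in `Λ`. For each critical direction `d`, perturbing the
parabolic arcs `x + t d + (t²/2) w` to feasible ones shows that the linear problem in `w` of the
second order expansions has no descent solution; its dual solution is a multiplier, depending on
`d`, whose Lagrangian has nonnegative second derivative along `d`. That derivative is affine in the
multiplier, so it is already nonnegative at one of the two endpoints. By Yuan's lemma, two quadratic
forms that are nowhere simultaneously negative have a nonnegative convex combination, and the
corresponding point of the segment is a multiplier that works for all `d` at once.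
-/

section YuanLemma

variable {V : Type*} [AddCommGroup V] [Module ℝ V]

theorem quadraticForm_sub_smul_add_smul (Q : QuadraticForm ℝ V) (d e : V) (s : ℝ) :
    Q ((1 - s) • d + s • e) =
      (1 - s) ^ 2 * Q d + s ^ 2 * Q e + (1 - s) * s * QuadraticMap.polar Q d e := by
  simp only [QuadraticMap.map_add, QuadraticMap.map_smul, QuadraticMap.polar_smul_left,
    QuadraticMap.polar_smul_right, smul_eq_mul]
  ring

theorem exists_quadraticForm_neg_and_eq_zero {P B : QuadraticForm ℝ V} {d e : V}
    (hPd : P d < 0) (hPe : P e < 0) (hBd : B d ≤ 0) (hBe : 0 ≤ B e) :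
    ∃ z, P z < 0 ∧ B z = 0 := by
  wlog hpolar : QuadraticMap.polar P d e ≤ 0 generalizing e
  · exact this (e := -e) (by simpa) (by simpa)
      (by rw [QuadraticMap.polar_neg_right]; linarith)
  have hcont : Continuous fun s : ℝ => B ((1 - s) • d + s • e) := by
    simp only [quadraticForm_sub_smul_add_smul]
    fun_prop
  obtain ⟨s, ⟨hs0, hs1⟩, hs⟩ :=
    intermediate_value_Icc zero_le_one hcont.continuousOn (show (0 : ℝ) ∈ _ by simp [hBd, hBe])
  refine ⟨_, ?_, hs⟩
  rw [quadraticForm_sub_smul_add_smul]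
  have hcross : (1 - s) * s * QuadraticMap.polar P d e ≤ 0 :=
    mul_nonpos_of_nonneg_of_nonpos (mul_nonneg (by linarith) hs0) hpolar
  have hdiag : (1 - s) ^ 2 * P d + s ^ 2 * P e < 0 := by
    rcases hs0.eq_or_lt with rfl | hs_pos
    · simpa
    · exact add_neg_of_nonpos_of_neg (mul_nonpos_of_nonneg_of_nonpos (sq_nonneg _) hPd.le)
        (mul_neg_of_pos_of_neg (pow_pos hs_pos 2) hPe)
  linarith

theorem exists_convexCombination_quadraticForm_nonneg {Q R : QuadraticForm ℝ V}
    (hQR : ∀ d, 0 ≤ Q d ∨ 0 ≤ R d) :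
    ∃ t ∈ Set.Icc (0 : ℝ) 1, ∀ d, 0 ≤ (1 - t) * Q d + t * R d := by
  by_contra! hneg
  let U : Set ℝ := {t | ∃ d, (1 - t) * Q d + t * R d < 0 ∧ Q d ≤ R d}
  let W : Set ℝ := {t | ∃ d, (1 - t) * Q d + t * R d < 0 ∧ R d ≤ Q d}
  have isOpen_neg (d : V) : IsOpen {t : ℝ | (1 - t) * Q d + t * R d < 0} :=
    isOpen_lt (by fun_prop) continuous_const
  have hU : IsOpen U := by
    simp only [U, Set.ofPred_exists, Set.ofPred_and]
    exact isOpen_iUnion fun d => (isOpen_neg d).inter isOpen_const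
  have hW : IsOpen W := by
    simp only [W, Set.ofPred_exists, Set.ofPred_and]
    exact isOpen_iUnion fun d => (isOpen_neg d).inter isOpen_const
  have hcover : Set.Icc (0 : ℝ) 1 ⊆ U ∪ W := fun t ht => by
    obtain ⟨d, hd⟩ := hneg t ht
    exact (le_total (Q d) (R d)).imp (fun hle => ⟨d, hd, hle⟩) fun hle => ⟨d, hd, hle⟩
  have zero_mem : (0 : ℝ) ∈ U := by
    obtain ⟨d, hd⟩ := hneg 0 (by simp)
    have hQ : Q d < 0 := by simpa using hd
    exact ⟨d, hd, hQ.le.trans ((hQR d).resolve_left hQ.not_ge)⟩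
  have one_mem : (1 : ℝ) ∈ W := by
    obtain ⟨d, hd⟩ := hneg 1 (by simp)
    have hR : R d < 0 := by simpa using hd
    exact ⟨d, hd, hR.le.trans ((hQR d).resolve_right hR.not_ge)⟩
  obtain ⟨t, -, ⟨d, hd, hQRd⟩, e, he, hRQe⟩ := isPreconnected_Icc U W hU hW hcover
    ⟨0, by simp, zero_mem⟩ ⟨1, by simp, one_mem⟩
  obtain ⟨z, hz, hBz⟩ := exists_quadraticForm_neg_and_eq_zero (P := (1 - t) • Q + t • R)
    (B := Q - R) (d := d) (e := e) hd he (sub_nonpos.2 hQRd) (sub_nonneg.2 hRQe)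
  have hz_eq : Q z = R z := sub_eq_zero.1 hBz
  have hz_neg : (1 - t) * Q z + t * R z < 0 := hz
  rw [hz_eq, ← add_mul, sub_add_cancel, one_mul] at hz_neg
  exact (hQR z).elim (hz_eq ▸ hz_neg).not_ge hz_neg.not_ge

end YuanLemma

theorem exists_subset_segment_of_collinear {E : Type*} [NormedAddCommGroup E] [NormedSpace ℝ E]
    {s : Set E} (hs : IsCompact s) (hcol : Collinear ℝ s) (hne : s.Nonempty) :
    ∃ a ∈ s, ∃ b ∈ s, s ⊆ segment ℝ a b := by
  obtain ⟨⟨a, b⟩, ⟨ha, hb⟩, hmax⟩ :=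
    (hs.prod hs).exists_isMaxOn (hne.prod hne) continuous_dist.continuousOn
  have dist_le {x y : E} (hx : x ∈ s) (hy : y ∈ s) : dist x y ≤ dist a b :=
    hmax (Set.mk_mem_prod hx hy)
  refine ⟨a, ha, b, hb, fun c hc => mem_segment_iff_wbtw.2 ?_⟩
  have habc : Collinear ℝ {a, b, c} := hcol.subset (by simp [Set.insert_subset_iff, *])
  rcases habc.wbtw_or_wbtw_or_wbtw with h | h | h
  · have := h.dist_add_dist
    have : c = b := by
      refine (dist_le_zero.1 ?_).symm
      linarith [dist_le ha hc]
    simp [this]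
  · exact h.symm
  · have := h.dist_add_dist
    have : c = a := by
      refine dist_le_zero.1 ?_
      linarith [dist_le hc hb]
    simp [this]

theorem exists_mem_forall_quadraticForm_nonneg {V P : Type*} [AddCommGroup V] [Module ℝ V]
    [NormedAddCommGroup P] [NormedSpace ℝ P] {s : Set P} (hs : IsCompact s) (hconv : Convex ℝ s)
    (hcol : Collinear ℝ s) (Q : P →ᵃ[ℝ] QuadraticForm ℝ V) (hQ : ∀ d, ∃ p ∈ s, 0 ≤ Q p d) :
    ∃ p ∈ s, ∀ d, 0 ≤ Q p d := by
  obtain ⟨a, ha, b, hb, hab⟩ := exists_subset_segment_of_collinear hs hcol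
    ((hQ 0).imp fun _ => And.left)
  have apply_lineMap (t : ℝ) (d : V) :
      Q (AffineMap.lineMap a b t) d = (1 - t) * Q a d + t * Q b d := by
    rw [AffineMap.apply_lineMap, AffineMap.lineMap_apply_module]
    rfl
  obtain ⟨t, ht, hnonneg⟩ := exists_convexCombination_quadraticForm_nonneg (Q := Q a) (R := Q b)
    fun d => by
      obtain ⟨p, hp, hd⟩ := hQ d
      rw [segment_eq_image_lineMap] at hab
      obtain ⟨t, ⟨ht₀, ht₁⟩, rfl⟩ := hab hp
      rw [apply_lineMap] at hd
      by_contra! hneg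
      exact hd.not_gt <|
        convex_Iio (0 : ℝ) hneg.1 hneg.2 (sub_nonneg.2 ht₁) ht₀ (sub_add_cancel 1 t)
  exact ⟨_, hconv.lineMap_mem ha hb ht, fun d => (apply_lineMap t d).symm ▸ hnonneg d⟩

section Multipliers

variable {ι κ M N : Type*} [Fintype ι] [Fintype κ] [AddCommGroup M] [Module ℝ M]
  [AddCommGroup N] [Module ℝ N]

/-- The combination `∑ i, λ i • H i + ∑ j, μ j • G j` of constraint data (values, gradients or
Hessians) `H` and `G`, as a linear function of the pair of multiplier vectors `(λ, μ)`. -/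
def lagrangeCombination (H : ι → M) (G : κ → M) : (ι → ℝ) × (κ → ℝ) →ₗ[ℝ] M :=
  (Fintype.linearCombination ℝ H).coprod (Fintype.linearCombination ℝ G)

/-- The set of Lagrange multipliers `(λ, μ)`, `0 ≤ μ`, attached to an objective gradient `F`,
equality constraint gradients `H` and active inequality constraint gradients `G`. -/
def multiplierSet (F : M) (H : ι → M) (G : κ → M) : Set ((ι → ℝ) × (κ → ℝ)) :=
  {p | 0 ≤ p.2 ∧ F + lagrangeCombination H G p = 0}

theorem lagrangeCombination_apply (H : ι → M) (G : κ → M) (p : (ι → ℝ) × (κ → ℝ)) :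
    lagrangeCombination H G p = ∑ i, p.1 i • H i + ∑ j, p.2 j • G j := by
  simp only [lagrangeCombination, LinearMap.coprod_apply, Fintype.linearCombination_apply]

theorem map_lagrangeCombination (f : M →ₗ[ℝ] N) (H : ι → M) (G : κ → M)
    (p : (ι → ℝ) × (κ → ℝ)) :
    f (lagrangeCombination H G p) =
      lagrangeCombination (fun i => f (H i)) (fun j => f (G j)) p := by
  simp only [lagrangeCombination_apply, map_add, map_sum, map_smul]

theorem mem_multiplierSet_map_iff {f : M →ₗ[ℝ] N} (hf : Function.Injective f) {F : M} {H : ι → M}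
    {G : κ → M} {p : (ι → ℝ) × (κ → ℝ)} :
    p ∈ multiplierSet (f F) (fun i => f (H i)) (fun j => f (G j)) ↔ p ∈ multiplierSet F H G := by
  simp only [multiplierSet, Set.mem_ofPred_eq, ← map_lagrangeCombination, ← map_add,
    map_eq_zero_iff f hf]

theorem lagrangeCombination_extend {κ' : Type*} [Fintype κ'] {e : κ' → κ}
    (he : Function.Injective e) (H : ι → M) (G : κ → M) (lam : ι → ℝ) (mu : κ' → ℝ) :
    lagrangeCombination H G (lam, Function.extend e mu 0) =
      lagrangeCombination H (fun k => G (e k)) (lam, mu) := by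
  simp only [lagrangeCombination_apply]
  congr 1
  refine (Fintype.sum_of_injective e he _ _ (fun j hj => ?_) fun k => ?_).symm
  · rw [Function.extend_apply' _ _ _ hj, Pi.zero_apply, zero_smul]
  · rw [he.extend_apply]

theorem range_lagrangeCombination (H : ι → M) (G : κ → M) :
    LinearMap.range (lagrangeCombination H G) =
      Submodule.span ℝ (Set.range H ∪ Set.range G) := by
  rw [lagrangeCombination, LinearMap.range_coprod, Fintype.range_linearCombination,
    Fintype.range_linearCombination, Submodule.span_union]

theorem convex_multiplierSet (F : M) (H : ι → M) (G : κ → M) :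
    Convex ℝ (multiplierSet F H G) := by
  rintro p ⟨hp, hFp⟩ q ⟨hq, hFq⟩ a b ha hb hab
  refine ⟨add_nonneg (smul_nonneg ha hp) (smul_nonneg hb hq), ?_⟩
  calc F + lagrangeCombination H G (a • p + b • q)
      = a • (F + lagrangeCombination H G p) + b • (F + lagrangeCombination H G q) := by
        rw [map_add, map_smul, map_smul, smul_add, smul_add, add_add_add_comm, ← add_smul, hab,
          one_smul]
    _ = 0 := by rw [hFp, hFq, smul_zero, smul_zero, add_zero]

theorem collinear_multiplierSet (F : M) {H : ι → M} {G : κ → M}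
    (hrank : Fintype.card ι + Fintype.card κ ≤ Set.finrank ℝ (Set.range H ∪ Set.range G) + 1) :
    Collinear ℝ (multiplierSet F H G) := by
  rw [collinear_iff_finrank_le_one]
  have hspan : vectorSpan ℝ (multiplierSet F H G) ≤ LinearMap.ker (lagrangeCombination H G) := by
    refine Submodule.span_le.2 ?_
    rintro _ ⟨p, ⟨-, hp⟩, q, ⟨-, hq⟩, rfl⟩
    simp [eq_neg_of_add_eq_zero_right hp, eq_neg_of_add_eq_zero_right hq]
  have hker := LinearMap.finrank_range_add_finrank_ker (lagrangeCombination H G)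
  rw [range_lagrangeCombination, Module.finrank_prod, Module.finrank_pi, Module.finrank_pi]
    at hker
  have hle := Submodule.finrank_mono hspan
  rw [Set.finrank] at hrank
  lia

theorem isClosed_multiplierSet (F : M) (H : ι → M) (G : κ → M) :
    IsClosed (multiplierSet F H G) := by
  have hstat : {p | F + lagrangeCombination H G p = 0} =
      (affineSpan ℝ {-F}).comap (lagrangeCombination H G).toAffineMap := by
    ext p
    simp [AffineSubspace.coe_comap, eq_neg_iff_add_eq_zero, add_comm F]
  have hclosed : IsClosed {p | F + lagrangeCombination H G p = 0} :=
    hstat ▸ AffineSubspace.closed_of_finiteDimensional _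
  exact (isClosed_le continuous_const continuous_snd).inter hclosed

theorem isCompact_multiplierSet (F : M) {H : ι → M} {G : κ → M} (hH : LinearIndependent ℝ H)
    {l : M →ₗ[ℝ] ℝ} (hlH : ∀ i, l (H i) = 0) (hlG : ∀ j, l (G j) < 0) :
    IsCompact (multiplierSet F H G) := by
  obtain ⟨r, hr⟩ := (Fintype.linearCombination ℝ H).exists_leftInverse_of_injective
    (LinearMap.ker_eq_bot.2 (hH.fintypeLinearCombination_injective))
  let B : Set (κ → ℝ) := Set.Icc 0 fun j => l F / -l (G j)
  let Ψ : (κ → ℝ) → (ι → ℝ) × (κ → ℝ) := fun μ =>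
    (-(r F + (r ∘ₗ Fintype.linearCombination ℝ G) μ), μ)
  have hΨ : Continuous Ψ :=
    ((continuous_const.add (LinearMap.continuous_of_finiteDimensional _)).neg).prodMk continuous_id
  refine (isCompact_Icc.image hΨ : IsCompact (Ψ '' B)).of_isClosed_subset
    (isClosed_multiplierSet F H G) ?_
  rintro ⟨lam, mu⟩ ⟨hmu, hstat⟩
  have hlF : l F = ∑ j, mu j * -l (G j) := by
    have := congrArg l hstat
    rw [map_add, map_lagrangeCombination, lagrangeCombination_apply, map_zero] at this
    simp only [hlH, smul_eq_mul, mul_zero, Finset.sum_const_zero, zero_add] at this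
    simp only [mul_neg, Finset.sum_neg_distrib]
    linarith
  refine ⟨mu, ⟨hmu, fun j => ?_⟩, Prod.ext ?_ rfl⟩
  · rw [le_div_iff₀ (neg_pos.2 (hlG j)), hlF]
    exact Finset.single_le_sum (f := fun j => mu j * -l (G j))
      (fun k _ => mul_nonneg (hmu k) (neg_pos.2 (hlG k)).le) (Finset.mem_univ j)
  · have hlam : r (Fintype.linearCombination ℝ H lam) = lam := LinearMap.congr_fun hr lam
    have := congrArg r hstat
    simp only [lagrangeCombination, LinearMap.coprod_apply, map_add, hlam, map_zero] at this
    simp only [Ψ, LinearMap.comp_apply]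
    rw [neg_eq_iff_add_eq_zero, ← this]
    abel

end Multipliers

section Alternative

variable {E κ : Type*}

theorem nonneg_and_nonpos_of_lt_on_neg_orthant {φ : (κ → ℝ) →L[ℝ] ℝ} {u : ℝ}
    (hφ : ∀ y, (∀ k, y k < 0) → φ y < u) : 0 ≤ u ∧ ∀ y ≤ 0, φ y ≤ 0 := by
  have hclosure (c : ℝ) (hc : ∀ y, (∀ k, y k < 0) → φ y ≤ c) (y : κ → ℝ) (hy : y ≤ 0) :
      φ y ≤ c := by
    have hmem : y ∈ closure (Set.univ.pi fun _ => Set.Iio (0 : ℝ)) := by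
      rw [closure_pi_set]
      exact fun k _ => by simpa using hy k
    have hsub : (Set.univ.pi fun _ => Set.Iio (0 : ℝ)) ⊆ {z | φ z ≤ c} :=
      fun z hz => hc z fun k => hz k trivial
    exact closure_minimal hsub (isClosed_le φ.continuous continuous_const) hmem
  refine ⟨by simpa using hclosure u (fun y hy => (hφ y hy).le) 0 le_rfl, hclosure 0 ?_⟩
  intro y hy
  by_contra! hpos
  have hu : 0 < u := hpos.trans (hφ y hy)
  have hscaled := hφ ((u / φ y) • y) fun k => mul_neg_of_pos_of_neg (div_pos hu hpos) (hy k)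
  rw [map_smul, smul_eq_mul, div_mul_cancel₀ _ hpos.ne'] at hscaled
  exact hscaled.false

variable [Fintype κ]

theorem exists_nonneg_ne_zero_forall_sum_mul_nonneg {A : Set (κ → ℝ)} (hA : Convex ℝ A)
    (hne : A.Nonempty) (hneg : ∀ y ∈ A, ∃ k, 0 ≤ y k) :
    ∃ μ : κ → ℝ, 0 ≤ μ ∧ μ ≠ 0 ∧ ∀ y ∈ A, 0 ≤ ∑ k, μ k * y k := by
  have hdisj : Disjoint (Set.univ.pi fun _ => Set.Iio (0 : ℝ)) A :=
    Set.disjoint_left.2 fun y hy hyA => by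
      obtain ⟨k, hk⟩ := hneg y hyA
      exact hk.not_gt (hy k trivial)
  obtain ⟨φ, u, hφneg, hφA⟩ := geometric_hahn_banach_open
    (convex_pi fun _ _ => convex_Iio 0) (isOpen_set_pi Set.finite_univ fun _ _ => isOpen_Iio)
    hA hdisj
  obtain ⟨hu, hφ⟩ := nonneg_and_nonpos_of_lt_on_neg_orthant fun y hy =>
    hφneg y fun k _ => hy k
  have hφ_eq (y : κ → ℝ) : φ y = ∑ k, φ (Pi.single k 1) * y k := by
    conv_lhs => rw [pi_eq_sum_univ' y]
    simp only [map_sum, map_smul, smul_eq_mul, mul_comm]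
  refine ⟨fun k => φ (Pi.single k 1), fun k => ?_, fun hzero => ?_, fun y hy => ?_⟩
  · simpa using hφ (-Pi.single k 1) (neg_nonpos.2 (Pi.single_nonneg.2 zero_le_one))
  · have hφ_zero (y : κ → ℝ) : φ y = 0 := by
      simp [hφ_eq y, fun k => congrFun hzero k]
    obtain ⟨a, ha⟩ := hne
    have hlt := hφneg (fun _ => -1) fun _ _ => by simp
    have hle := hφA a ha
    rw [hφ_zero] at hlt hle
    linarith
  · rw [← hφ_eq]
    exact hu.trans (hφA y hy)

variable [AddCommGroup E] [Module ℝ E] {C : Set E} {F : E → ℝ} {G : κ → E → ℝ}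

theorem exists_fritzJohn_multiplier (hF : ConvexOn ℝ C F) (hG : ∀ k, ConvexOn ℝ C (G k))
    (hne : C.Nonempty) (hnonneg : ∀ z ∈ C, (∀ k, G k z < 0) → 0 ≤ F z) :
    ∃ (α : ℝ) (μ : κ → ℝ), 0 ≤ α ∧ 0 ≤ μ ∧ (α = 0 → μ ≠ 0) ∧
      ∀ z ∈ C, 0 ≤ α * F z + ∑ k, μ k * G k z := by
  let A : Set (Option κ → ℝ) := {y | ∃ z ∈ C, F z ≤ y none ∧ ∀ k, G k z ≤ y (some k)}
  have hA : Convex ℝ A := by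
    rintro y ⟨z, hz, hFz, hGz⟩ y' ⟨z', hz', hFz', hGz'⟩ a b ha hb hab
    exact ⟨a • z + b • z', hF.1 hz hz' ha hb hab,
      (hF.2 hz hz' ha hb hab).trans (by dsimp; gcongr),
      fun k => ((hG k).2 hz hz' ha hb hab).trans (by dsimp; gcongr <;> apply_assumption)⟩
  have mem_A {z : E} (hz : z ∈ C) : (fun k : Option κ => k.elim (F z) (G · z)) ∈ A :=
    ⟨z, hz, le_rfl, fun _ => le_rfl⟩
  have hneg : ∀ y ∈ A, ∃ k, 0 ≤ y k := by
    rintro y ⟨z, hz, hFz, hGz⟩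
    by_contra! hy
    exact ((hnonneg z hz fun k => (hGz k).trans_lt (hy _)).trans hFz).not_gt (hy none)
  obtain ⟨ν, hν, hν_ne, hνA⟩ := exists_nonneg_ne_zero_forall_sum_mul_nonneg hA
    ⟨_, mem_A hne.some_mem⟩ hneg
  refine ⟨ν none, fun k => ν (some k), hν none, fun k => hν _, fun hnone hsome => hν_ne ?_,
    fun z hz => by simpa [Fintype.sum_option] using hνA _ (mem_A hz)⟩
  exact funext (Option.rec hnone (congrFun hsome))

theorem exists_lagrangeMultiplier_of_slater (hF : ConvexOn ℝ C F) (hG : ∀ k, ConvexOn ℝ C (G k))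
    (slater : ∃ z ∈ C, ∀ k, G k z < 0) (hnonneg : ∀ z ∈ C, (∀ k, G k z < 0) → 0 ≤ F z) :
    ∃ μ : κ → ℝ, 0 ≤ μ ∧ ∀ z ∈ C, 0 ≤ F z + ∑ k, μ k * G k z := by
  obtain ⟨z₀, hz₀, hGz₀⟩ := slater
  obtain ⟨α, μ, hα, hμ, hαμ, hsum⟩ := exists_fritzJohn_multiplier hF hG ⟨z₀, hz₀⟩ hnonneg
  have hα_pos : 0 < α := by
    refine hα.lt_of_ne' fun hα_zero => hαμ hα_zero ?_
    have hterm (k : κ) : μ k * G k z₀ ≤ 0 := mul_nonpos_of_nonneg_of_nonpos (hμ k) (hGz₀ k).le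
    have hsum_zero : ∑ k, μ k * G k z₀ = 0 :=
      (Finset.sum_nonpos fun k _ => hterm k).antisymm (by simpa [hα_zero] using hsum z₀ hz₀)
    rw [Finset.sum_eq_zero_iff_of_nonpos fun k _ => hterm k] at hsum_zero
    exact funext fun k =>
      (mul_eq_zero.1 (hsum_zero k (Finset.mem_univ k))).resolve_right (hGz₀ k).ne
  refine ⟨fun k => μ k / α, fun k => div_nonneg (hμ k) hα, fun z hz => ?_⟩
  have hscale : F z + ∑ k, μ k / α * G k z = (α * F z + ∑ k, μ k * G k z) / α := by
    rw [add_div, Finset.sum_div, mul_div_cancel_left₀ _ hα_pos.ne']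
    simp only [div_mul_eq_mul_div]
  rw [hscale]
  exact div_nonneg (hsum z hz) hα

theorem mem_span_range_of_forall_ker_bddBelow {ι : Type*} [Finite ι] {Φ : Module.Dual ℝ E}
    {H : ι → Module.Dual ℝ E} {r : ℝ} (hΦ : ∀ v, (∀ i, H i v = 0) → r ≤ Φ v) :
    Φ ∈ Submodule.span ℝ (Set.range H) := by
  refine mem_span_of_iInf_ker_le_ker fun v hv => ?_
  simp only [Submodule.mem_iInf, LinearMap.mem_ker] at hv ⊢
  by_contra hne
  have := hΦ (((r - 1) / Φ v) • v) fun i => by rw [map_smul, hv, smul_zero]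
  rw [map_smul, smul_eq_mul, div_mul_cancel₀ _ hne] at this
  linarith

theorem exists_equality_multiplier {ι : Type*} [Fintype ι] {Φ : Module.Dual ℝ E}
    {H : ι → Module.Dual ℝ E} {b : ι → ℝ} {r : ℝ} (hne : ∃ z, ∀ i, H i z + b i = 0)
    (hΦ : ∀ z, (∀ i, H i z + b i = 0) → 0 ≤ Φ z + r) :
    ∃ lam : ι → ℝ, Φ + ∑ i, lam i • H i = 0 ∧ 0 ≤ r + ∑ i, lam i * b i := by
  obtain ⟨z₀, hz₀⟩ := hne
  obtain ⟨lam, hlam⟩ := (Submodule.mem_span_range_iff_exists_fun ℝ).1 <| neg_mem <|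
    mem_span_range_of_forall_ker_bddBelow (Φ := Φ) (H := H) (r := -r - Φ z₀) fun v hv => by
      have := hΦ (z₀ + v) fun i => by rw [map_add, hv, add_zero, hz₀]
      rw [map_add] at this
      linarith
  have hvalue : Φ z₀ = ∑ i, lam i * b i := by
    have := LinearMap.congr_fun hlam z₀
    simp only [LinearMap.sum_apply, LinearMap.smul_apply, LinearMap.neg_apply, smul_eq_mul,
      eq_neg_of_add_eq_zero_left (hz₀ _), mul_neg, Finset.sum_neg_distrib, neg_inj] at this
    exact this.symm
  refine ⟨lam, by rw [hlam, add_neg_cancel], ?_⟩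
  linarith [hΦ z₀ hz₀]

theorem exists_mem_multiplierSet_of_slater {ι : Type*} [Fintype ι] {F : Module.Dual ℝ E}
    {H : ι → Module.Dual ℝ E} {G : κ → Module.Dual ℝ E} {a : ℝ} {b : ι → ℝ} {c : κ → ℝ}
    (slater : ∃ z, (∀ i, H i z + b i = 0) ∧ ∀ j, G j z + c j < 0)
    (hnonneg : ∀ z, (∀ i, H i z + b i = 0) → (∀ j, G j z + c j < 0) → 0 ≤ F z + a) :
    ∃ p ∈ multiplierSet F H G, 0 ≤ a + lagrangeCombination b c p := by
  have hC : Convex ℝ {z | ∀ i, H i z + b i = 0} := by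
    simp only [Set.ofPred_forall, add_eq_zero_iff_eq_neg]
    exact convex_iInter fun i => convex_hyperplane (H i).isLinear _
  obtain ⟨mu, hmu, hdual⟩ := exists_lagrangeMultiplier_of_slater ((F.convexOn hC).add_const a)
    (fun j => ((G j).convexOn hC).add_const (c j)) slater hnonneg
  obtain ⟨lam, hstat, hvalue⟩ := exists_equality_multiplier (Φ := F + ∑ j, mu j • G j)
    (r := a + ∑ j, mu j * c j) (slater.imp fun _ => And.left) fun z hz => by
      calc 0 ≤ F z + a + ∑ j, mu j * (G j z + c j) := hdual z hz
        _ = _ := by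
          simp only [LinearMap.add_apply, LinearMap.sum_apply, LinearMap.smul_apply,
            smul_eq_mul, mul_add, Finset.sum_add_distrib]
          ring
  refine ⟨(lam, mu), ⟨hmu, ?_⟩, ?_⟩
  · rw [lagrangeCombination_apply, ← hstat]
    abel
  · simp only [lagrangeCombination_apply, smul_eq_mul]
    linarith

end Alternative

theorem surjective_pi_of_linearIndependent {K E ι : Type*} [Field K] [AddCommGroup E]
    [Module K E] [Finite ι] {H : ι → Module.Dual K E} (hH : LinearIndependent K H) :
    Function.Surjective (LinearMap.pi H) := by
  have hcoe : LinearIndependent K fun i => ⇑(H i) :=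
    hH.map' (LinearMap.ltoFun K E K K) (LinearMap.ker_eq_bot.2 DFunLike.coe_injective)
  have hspan := span_flip_eq_top_iff_linearIndependent.2 hcoe
  have hrange : Set.range (flip fun i => ⇑(H i)) = LinearMap.range (LinearMap.pi H) := rfl
  rwa [hrange, Submodule.span_eq, LinearMap.range_eq_top] at hspan

open Filter in
theorem exists_map_add_eq_zero_and_map_add_neg {ι κ E : Type*} [Finite ι] [Finite κ]
    [AddCommGroup E] [Module ℝ E] {H : ι → Module.Dual ℝ E} {G : κ → Module.Dual ℝ E}
    (hH : LinearIndependent ℝ H) (hslater : ∃ v, (∀ i, H i v = 0) ∧ ∀ j, G j v < 0) (b : ι → ℝ)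
    (c : κ → ℝ) :
    ∃ z, (∀ i, H i z + b i = 0) ∧ ∀ j, G j z + c j < 0 := by
  obtain ⟨v, hHv, hGv⟩ := hslater
  obtain ⟨z₀, hz₀⟩ := surjective_pi_of_linearIndependent hH (-b)
  have hlarge : ∀ᶠ s : ℝ in atTop, ∀ j, G j z₀ + c j + s * G j v < 0 :=
    eventually_all.2 fun j => (tendsto_const_nhds.add_atBot
      (tendsto_id.atTop_mul_const_of_neg (hGv j))).eventually_lt_atBot 0
  obtain ⟨s, hs⟩ := hlarge.exists
  refine ⟨z₀ + s • v, fun i => ?_, fun j => ?_⟩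
  · have : H i z₀ = -b i := congrFun hz₀ i
    rw [map_add, map_smul, hHv, smul_zero, add_zero, this, neg_add_cancel]
  · rw [map_add, map_smul, smul_eq_mul]
    linarith [hs j]

section SecondOrderExpansion

open Filter Topology Asymptotics

variable {E F : Type*} [NormedAddCommGroup E] [NormedSpace ℝ E] [NormedAddCommGroup F]
  [NormedSpace ℝ F] {φ : E → F} {x d w₀ : E} {w : ℝ → E}

theorem norm_taylor_two_remainder_le {B : E →L[ℝ] E →L[ℝ] F} {u : E} {K : ℝ}
    (hφ : ∀ s ∈ Set.Icc (0 : ℝ) 1, DifferentiableAt ℝ φ (x + s • u))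
    (hK : ∀ s ∈ Set.Icc (0 : ℝ) 1, ‖fderiv ℝ φ (x + s • u) - fderiv ℝ φ x - B (s • u)‖ ≤ K) :
    ‖φ (x + u) - φ x - fderiv ℝ φ x u - (1 / 2 : ℝ) • B u u‖ ≤ K * ‖u‖ := by
  let r : ℝ → F := fun s => φ (x + s • u) - s • fderiv ℝ φ x u - (s ^ 2 / 2) • B u u
  have hr (s : ℝ) (hs : s ∈ Set.Icc (0 : ℝ) 1) : HasDerivWithinAt r
      ((fderiv ℝ φ (x + s • u) - fderiv ℝ φ x - B (s • u)) u) (Set.Icc 0 1) s := by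
    have hline : HasDerivAt (fun s : ℝ => x + s • u) u s := by
      simpa using ((hasDerivAt_id s).smul_const u).const_add x
    have hsq : HasDerivAt (fun s : ℝ => s ^ 2 / 2) s s := by
      simpa using (hasDerivAt_pow 2 s).div_const 2
    have := (((hφ s hs).hasFDerivAt.comp_hasDerivAt s hline).sub
      ((hasDerivAt_id s).smul_const (fderiv ℝ φ x u))).sub (hsq.smul_const (B u u))
    exact this.hasDerivWithinAt.congr_deriv (by simp)
  have hle := norm_image_sub_le_of_norm_deriv_le_segment_01' hr fun s hs =>
    ContinuousLinearMap.le_of_opNorm_le _ (hK s (Set.Ico_subset_Icc_self hs)) u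
  have hincr : r 1 - r 0 = φ (x + u) - φ x - fderiv ℝ φ x u - (1 / 2 : ℝ) • B u u := by
    simp only [r, one_smul, one_pow, zero_smul, add_zero, sub_zero, ne_eq, OfNat.ofNat_ne_zero,
      not_false_eq_true, zero_pow, zero_div]
    abel
  rwa [hincr] at hle

theorem isLittleO_taylor_two (hφ : ContDiffAt ℝ 2 φ x) :
    (fun u => φ (x + u) - φ x - fderiv ℝ φ x u - (1 / 2 : ℝ) • fderiv ℝ (fderiv ℝ φ) x u u)
      =o[𝓝 0] fun u => ‖u‖ ^ 2 := by
  have hdiff : ∀ᶠ u in 𝓝 (0 : E), DifferentiableAt ℝ φ (x + u) := by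
    have htrans : Tendsto (x + ·) (𝓝 0) (𝓝 x) := by
      simpa using (continuous_const_add x).tendsto 0
    exact htrans.eventually <|
      (hφ.eventually (by simp)).mono fun y hy => hy.differentiableAt two_ne_zero
  have hfderiv : HasFDerivAt (fderiv ℝ φ) (fderiv ℝ (fderiv ℝ φ) x) x :=
    ((hφ.fderiv_right (m := 1) (by norm_num)).differentiableAt one_ne_zero).hasFDerivAt
  refine isLittleO_iff.2 fun ε hε => ?_
  obtain ⟨δ, hδ, hball⟩ := Metric.eventually_nhds_iff_ball.1 <| hdiff.and <|
    isLittleO_iff.1 (hasFDerivAt_iff_isLittleO_nhds_zero.1 hfderiv) hε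
  refine Metric.eventually_nhds_iff_ball.2 ⟨δ, hδ, fun u hu => ?_⟩
  have norm_le (s : ℝ) (hs : s ∈ Set.Icc (0 : ℝ) 1) : ‖s • u‖ ≤ ‖u‖ := by
    rw [norm_smul, Real.norm_of_nonneg hs.1]
    exact mul_le_of_le_one_left (norm_nonneg u) hs.2
  have mem_ball (s : ℝ) (hs : s ∈ Set.Icc (0 : ℝ) 1) : s • u ∈ Metric.ball (0 : E) δ :=
    mem_ball_zero_iff.2 ((norm_le s hs).trans_lt (mem_ball_zero_iff.1 hu))
  have := norm_taylor_two_remainder_le (K := ε * ‖u‖) (fun s hs => (hball _ (mem_ball s hs)).1)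
    fun s hs => (hball _ (mem_ball s hs)).2.trans (by gcongr; exact norm_le s hs)
  rwa [norm_pow, norm_norm, pow_two, ← mul_assoc]

/-- The arc `t ↦ x + t d + (t²/2) w(t)`; when `w(t) → w₀` it has velocity `d` and second order
displacement `w₀` at `x`. -/
def secondOrderArc (x d : E) (w : ℝ → E) (t : ℝ) : E :=
  x + t • d + (t ^ 2 / 2) • w t

theorem tendsto_secondOrderArc_velocity (hw : Tendsto w (𝓝[>] 0) (𝓝 w₀)) :
    Tendsto (fun t => d + (t / 2) • w t) (𝓝[>] 0) (𝓝 d) := by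
  have hid : Tendsto (fun t : ℝ => t / 2) (𝓝[>] 0) (𝓝 0) := by
    simpa using ((continuous_id.div_const (2 : ℝ)).tendsto 0).mono_left nhdsWithin_le_nhds
  simpa using (hid.smul hw).const_add d

theorem secondOrderArc_eq_add_smul (t : ℝ) :
    secondOrderArc x d w t = x + t • (d + (t / 2) • w t) := by
  rw [secondOrderArc, smul_add, smul_smul, add_assoc]
  ring_nf

theorem tendsto_secondOrderArc (hw : Tendsto w (𝓝[>] 0) (𝓝 w₀)) :
    Tendsto (secondOrderArc x d w) (𝓝[>] 0) (𝓝 x) := by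
  have hid : Tendsto (fun t : ℝ => t) (𝓝[>] 0) (𝓝 0) := tendsto_id.mono_left nhdsWithin_le_nhds
  simpa only [funext secondOrderArc_eq_add_smul, zero_smul, add_zero] using
    (hid.smul (tendsto_secondOrderArc_velocity (d := d) hw)).const_add x

theorem tendsto_secondOrderArc_quotient (hφ : ContDiffAt ℝ 2 φ x) (hd : fderiv ℝ φ x d = 0)
    (hw : Tendsto w (𝓝[>] 0) (𝓝 w₀)) :
    Tendsto (fun t : ℝ => (t ^ 2 / 2)⁻¹ • (φ (secondOrderArc x d w t) - φ x)) (𝓝[>] 0)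
      (𝓝 (fderiv ℝ φ x w₀ + fderiv ℝ (fderiv ℝ φ) x d d)) := by
  let v : ℝ → E := fun t => d + (t / 2) • w t
  have hv : Tendsto v (𝓝[>] 0) (𝓝 d) := tendsto_secondOrderArc_velocity hw
  have hid : Tendsto (fun t : ℝ => t) (𝓝[>] 0) (𝓝 0) := tendsto_id.mono_left nhdsWithin_le_nhds
  have hO : (fun t => ‖t • v t‖ ^ 2) =O[𝓝[>] 0] fun t : ℝ => t ^ 2 := by
    have := ((isBigO_refl (fun t : ℝ => t) (𝓝[>] 0)).smul (hv.isBigO_one ℝ)).norm_left.pow 2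
    simpa using this
  let R : E → F := fun u =>
    φ (x + u) - φ x - fderiv ℝ φ x u - (1 / 2 : ℝ) • fderiv ℝ (fderiv ℝ φ) x u u
  have hR : Tendsto (fun t : ℝ => (t ^ 2 / 2)⁻¹ • R (t • v t)) (𝓝[>] 0) (𝓝 0) := by
    have htv : Tendsto (fun t => t • v t) (𝓝[>] 0) (𝓝 0) := by simpa using hid.smul hv
    have := ((isLittleO_taylor_two hφ).comp_tendsto htv).trans_isBigO hO
    simpa [R, smul_smul, div_eq_mul_inv, mul_comm] using
      this.tendsto_inv_smul_nhds_zero.const_smul (2 : ℝ)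
  have hquad : Tendsto (fun t => fderiv ℝ (fderiv ℝ φ) x (v t) (v t)) (𝓝[>] 0)
      (𝓝 (fderiv ℝ (fderiv ℝ φ) x d d)) :=
    ((show Continuous fun u => fderiv ℝ (fderiv ℝ φ) x u u by fun_prop).tendsto d).comp hv
  have hsum := ((((fderiv ℝ φ x).continuous.tendsto w₀).comp hw).add hquad).add hR
  rw [add_zero] at hsum
  refine hsum.congr' ?_
  filter_upwards [self_mem_nhdsWithin] with t (ht : 0 < t)
  have hlin : fderiv ℝ φ x (t • v t) = (t ^ 2 / 2) • fderiv ℝ φ x (w t) := by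
    simp only [v, map_smul, map_add, hd, zero_add, smul_smul]
    ring_nf
  have hincr : φ (secondOrderArc x d w t) - φ x = (t ^ 2 / 2) •
      (fderiv ℝ φ x (w t) + fderiv ℝ (fderiv ℝ φ) x (v t) (v t)) + R (t • v t) := by
    simp only [R, hlin, secondOrderArc_eq_add_smul, v, map_smul, _root_.smul_apply, smul_smul]
    module
  rw [hincr, smul_add _ (_ • _) (R _), inv_smul_smul₀ (by positivity)]
  rfl

theorem eventually_secondOrderArc_lt {φ : E → ℝ} (hφ : ContDiffAt ℝ 2 φ x)
    (hd : fderiv ℝ φ x d = 0) (hw : Tendsto w (𝓝[>] 0) (𝓝 w₀))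
    (hneg : fderiv ℝ φ x w₀ + fderiv ℝ (fderiv ℝ φ) x d d < 0) :
    ∀ᶠ t in 𝓝[>] 0, φ (secondOrderArc x d w t) < φ x := by
  filter_upwards [(tendsto_secondOrderArc_quotient hφ hd hw).eventually_lt_const hneg,
    self_mem_nhdsWithin] with t hquot (ht : 0 < t)
  exact sub_neg.1 ((smul_neg_iff_of_pos_left (by positivity)).1 hquot)

end SecondOrderExpansion

section FeasibleArc

open Filter Topology

variable {E F : Type*} [NormedAddCommGroup E] [NormedSpace ℝ E] [CompleteSpace E]
  [NormedAddCommGroup F] [NormedSpace ℝ F] [CompleteSpace F]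

theorem exists_eq_and_norm_sub_le_of_surjective_fderiv {H : E → F} {H' : E →L[ℝ] F} {x : E}
    (hH : HasStrictFDerivAt H H' x) (hsurj : Function.Surjective H') :
    ∃ C : ℝ, ∀ᶠ y in 𝓝 x, ∃ z, H z = H x ∧ ‖z - y‖ ≤ C * ‖H y - H x‖ := by
  have hrange : H'.range = ⊤ := LinearMap.range_eq_top.2 hsurj
  let R := H'.nonlinearRightInverseOfSurjective hrange
  have hRpos : 0 < R.nnnorm := H'.nonlinearRightInverseOfSurjective_nnnorm_pos hrange
  obtain ⟨s, hs, happrox⟩ := hH.approximates_deriv_on_nhds (c := (2 * R.nnnorm)⁻¹)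
    (Or.inr (by positivity))
  obtain ⟨δ, hδ, hball⟩ := Metric.mem_nhds_iff.1 hs
  have hres : Tendsto (fun y => dist y x + 2 * R.nnnorm * ‖H y - H x‖) (𝓝 x) (𝓝 0) := by
    have hcont := hH.hasFDerivAt.continuousAt
    have : ContinuousAt (fun y => dist y x + 2 * R.nnnorm * ‖H y - H x‖) x := by fun_prop
    simpa [ContinuousAt] using this
  refine ⟨2 * R.nnnorm, (hres.eventually_lt_const hδ).mono fun y hy => ?_⟩
  obtain ⟨z, hz, hzH⟩ := happrox.surjOn_closedBall_of_nonlinearRightInverse R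
    (b := y) (ε := 2 * R.nnnorm * ‖H y - H x‖) (by positivity)
    ((Metric.closedBall_subset_ball' (by rwa [add_comm])).trans hball)
    (show H x ∈ _ by
      rw [Metric.mem_closedBall, dist_comm, dist_eq_norm]
      push_cast
      field_simp
      norm_num)
  exact ⟨z, hzH, by rwa [← dist_eq_norm]⟩

theorem exists_tendsto_secondOrderArc_eq {H : E → F} {H' : E →L[ℝ] F} {x d w₀ : E}
    (hH : HasStrictFDerivAt H H' x) (hsurj : Function.Surjective H')
    (hquot : Tendsto (fun t : ℝ => (t ^ 2 / 2)⁻¹ • (H (secondOrderArc x d (fun _ => w₀) t) - H x))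
      (𝓝[>] 0) (𝓝 0)) :
    ∃ w : ℝ → E, Tendsto w (𝓝[>] 0) (𝓝 w₀) ∧
      ∀ᶠ t in 𝓝[>] 0, H (secondOrderArc x d w t) = H x := by
  obtain ⟨C, hC⟩ := exists_eq_and_norm_sub_le_of_surjective_fderiv hH hsurj
  obtain ⟨z, hz⟩ :=
    ((tendsto_secondOrderArc (d := d) (tendsto_const_nhds (x := w₀))).eventually hC).choice
  have hcorr : Tendsto (fun t : ℝ => (t ^ 2 / 2)⁻¹ • (z t - secondOrderArc x d (fun _ => w₀) t))
      (𝓝[>] 0) (𝓝 0) := by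
    have hbound := hquot.norm.const_mul C
    rw [norm_zero, mul_zero] at hbound
    refine squeeze_zero_norm' (hz.mono fun t ht => ?_) hbound
    rw [norm_smul, norm_smul, mul_left_comm]
    exact mul_le_mul_of_nonneg_left ht.2 (norm_nonneg _)
  refine ⟨_, by simpa only [add_zero] using hcorr.const_add w₀, ?_⟩
  filter_upwards [hz, self_mem_nhdsWithin] with t ht (htpos : 0 < t)
  rw [← ht.1, secondOrderArc, smul_add, smul_inv_smul₀ (by positivity), secondOrderArc]
  congr 1
  abel

theorem exists_tendsto_secondOrderArc_forall_eq {ι : Type*} [Finite ι] {h : ι → E → ℝ} {x d w₀ : E}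
    (hh : ∀ i, ContDiffAt ℝ 2 (h i) x) (hli : LinearIndependent ℝ fun i => fderiv ℝ (h i) x)
    (hd : ∀ i, fderiv ℝ (h i) x d = 0)
    (hw₀ : ∀ i, fderiv ℝ (h i) x w₀ + fderiv ℝ (fderiv ℝ (h i)) x d d = 0) :
    ∃ w : ℝ → E, Tendsto w (𝓝[>] 0) (𝓝 w₀) ∧
      ∀ᶠ t in 𝓝[>] 0, ∀ i, h i (secondOrderArc x d w t) = h i x := by
  have := Fintype.ofFinite ι
  have hstrict : HasStrictFDerivAt (fun y i => h i y)
      (ContinuousLinearMap.pi fun i => fderiv ℝ (h i) x) x :=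
    hasStrictFDerivAt_pi'.2 fun i => (hh i).hasStrictFDerivAt two_ne_zero
  have hsurj : Function.Surjective (ContinuousLinearMap.pi fun i => fderiv ℝ (h i) x) :=
    surjective_pi_of_linearIndependent <| hli.map' (ContinuousLinearMap.coeLM ℝ)
      (LinearMap.ker_eq_bot.2 ContinuousLinearMap.coe_injective)
  obtain ⟨w, hw, heq⟩ := exists_tendsto_secondOrderArc_eq (d := d) (w₀ := w₀) hstrict hsurj <|
    tendsto_pi_nhds.2 fun i => by
      have := tendsto_secondOrderArc_quotient (hh i) (hd i) (tendsto_const_nhds (x := w₀))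
      rw [hw₀ i] at this
      exact this
  exact ⟨w, hw, heq.mono fun t ht i => congrFun ht i⟩

end FeasibleArc

section NecessaryConditions

open Filter Topology

variable {E ι κ : Type*}

/-- The feasible set of the constraints `h i y = 0` and `g j y ≤ 0`. -/
def feasibleSet (h : ι → E → ℝ) (g : κ → E → ℝ) : Set E :=
  {y | (∀ i, h i y = 0) ∧ ∀ j, g j y ≤ 0}

theorem isLocalMinOn_feasibleSet_active [TopologicalSpace E] [Finite κ] {f : E → ℝ}
    {h : ι → E → ℝ} {g : κ → E → ℝ} {x : E} (hg : ∀ j, ContinuousAt (g j) x)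
    (hgx : ∀ j, g j x ≤ 0) (hmin : IsLocalMinOn f (feasibleSet h g) x) :
    IsLocalMinOn f (feasibleSet h fun j : {j // g j x = 0} => g j) x := by
  have hinactive : ∀ᶠ y in 𝓝 x, ∀ j, g j x ≠ 0 → g j y < 0 := by
    refine eventually_all.2 fun j => ?_
    rw [eventually_imp_distrib_left]
    exact fun hj => (hg j).eventually_lt_const ((hgx j).lt_of_ne hj)
  refine eventually_nhdsWithin_iff.2 ?_
  filter_upwards [eventually_nhdsWithin_iff.1 hmin, hinactive] with y hy hneg hfeas
  refine hy ⟨hfeas.1, fun j => ?_⟩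
  by_cases hj : g j x = 0
  · exact hfeas.2 ⟨j, hj⟩
  · exact (hneg j hj).le

variable [NormedAddCommGroup E] [NormedSpace ℝ E] {f : E → ℝ} {h : ι → E → ℝ} {g : κ → E → ℝ}
  {x d : E}

/-- The critical subspace at `x`: the directions annihilated by the gradients of all the
constraints. -/
def criticalSubspace (h : ι → E → ℝ) (g : κ → E → ℝ) (x : E) : Submodule ℝ E :=
  (⨅ i, (fderiv ℝ (h i) x).ker) ⊓ ⨅ j, (fderiv ℝ (g j) x).ker

theorem mem_criticalSubspace : d ∈ criticalSubspace h g x ↔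
    (∀ i, fderiv ℝ (h i) x d = 0) ∧ ∀ j, fderiv ℝ (g j) x d = 0 := by
  simp [criticalSubspace]

theorem fderiv_apply_eq_zero_of_mem_criticalSubspace [Fintype ι] [Fintype κ]
    {p : (ι → ℝ) × (κ → ℝ)}
    (hp : p ∈ multiplierSet (fderiv ℝ f x) (fun i => fderiv ℝ (h i) x) fun j => fderiv ℝ (g j) x)
    (hd : d ∈ criticalSubspace h g x) : fderiv ℝ f x d = 0 := by
  obtain ⟨hhd, hgd⟩ := mem_criticalSubspace.1 hd
  simpa [lagrangeCombination_apply, hhd, hgd] using DFunLike.congr_fun hp.2 d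

variable [CompleteSpace E]

theorem fderiv_add_hessian_nonneg_of_isLocalMinOn [Finite ι] [Finite κ] (hf : ContDiffAt ℝ 2 f x)
    (hh : ∀ i, ContDiffAt ℝ 2 (h i) x) (hg : ∀ j, ContDiffAt ℝ 2 (g j) x)
    (hhx : ∀ i, h i x = 0) (hgx : ∀ j, g j x = 0) (hmin : IsLocalMinOn f (feasibleSet h g) x)
    (hli : LinearIndependent ℝ fun i => fderiv ℝ (h i) x) (hfd : fderiv ℝ f x d = 0)
    (hhd : ∀ i, fderiv ℝ (h i) x d = 0) (hgd : ∀ j, fderiv ℝ (g j) x d = 0) {w₀ : E}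
    (hhw : ∀ i, fderiv ℝ (h i) x w₀ + fderiv ℝ (fderiv ℝ (h i)) x d d = 0)
    (hgw : ∀ j, fderiv ℝ (g j) x w₀ + fderiv ℝ (fderiv ℝ (g j)) x d d < 0) :
    0 ≤ fderiv ℝ f x w₀ + fderiv ℝ (fderiv ℝ f) x d d := by
  by_contra! hfw
  obtain ⟨w, hw, hheq⟩ := exists_tendsto_secondOrderArc_forall_eq hh hli hhd hhw
  have hglt : ∀ᶠ t in 𝓝[>] 0, ∀ j, g j (secondOrderArc x d w t) < g j x :=
    eventually_all.2 fun j => eventually_secondOrderArc_lt (hg j) (hgd j) hw (hgw j)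
  obtain ⟨t, hft, hht, hgt, hle⟩ := ((eventually_secondOrderArc_lt hf hfd hw hfw).and <|
    hheq.and <| hglt.and <|
      (tendsto_secondOrderArc hw).eventually (eventually_nhdsWithin_iff.1 hmin)).exists
  exact (hle ⟨fun i => (hht i).trans (hhx i), fun j => (hgx j ▸ hgt j).le⟩).not_gt hft

variable [Fintype ι] [Fintype κ]

theorem exists_mem_multiplierSet_hessian_nonneg (hf : ContDiffAt ℝ 2 f x)
    (hh : ∀ i, ContDiffAt ℝ 2 (h i) x) (hg : ∀ j, ContDiffAt ℝ 2 (g j) x)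
    (hhx : ∀ i, h i x = 0) (hgx : ∀ j, g j x = 0) (hmin : IsLocalMinOn f (feasibleSet h g) x)
    (hli : LinearIndependent ℝ fun i => fderiv ℝ (h i) x)
    (hslater : ∃ v, (∀ i, fderiv ℝ (h i) x v = 0) ∧ ∀ j, fderiv ℝ (g j) x v < 0)
    (hfd : fderiv ℝ f x d = 0)
    (hhd : ∀ i, fderiv ℝ (h i) x d = 0) (hgd : ∀ j, fderiv ℝ (g j) x d = 0) :
    ∃ p ∈ multiplierSet (fderiv ℝ f x) (fun i => fderiv ℝ (h i) x) (fun j => fderiv ℝ (g j) x),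
      0 ≤ fderiv ℝ (fderiv ℝ f) x d d +
        lagrangeCombination (fun i => fderiv ℝ (fderiv ℝ (h i)) x d d)
          (fun j => fderiv ℝ (fderiv ℝ (g j)) x d d) p := by
  have hinj : Function.Injective (ContinuousLinearMap.coeLM ℝ : (E →L[ℝ] ℝ) →ₗ[ℝ] _) :=
    ContinuousLinearMap.coe_injective
  simp only [← mem_multiplierSet_map_iff hinj]
  exact exists_mem_multiplierSet_of_slater
    (exists_map_add_eq_zero_and_map_add_neg (hli.map' _ (LinearMap.ker_eq_bot.2 hinj)) hslater _ _)
    fun w₀ hhw hgw => fderiv_add_hessian_nonneg_of_isLocalMinOn hf hh hg hhx hgx hmin hli hfd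
      hhd hgd hhw hgw

theorem exists_mem_multiplierSet_forall_hessian_nonneg (hf : ContDiffAt ℝ 2 f x)
    (hh : ∀ i, ContDiffAt ℝ 2 (h i) x) (hg : ∀ j, ContDiffAt ℝ 2 (g j) x)
    (hhx : ∀ i, h i x = 0) (hgx : ∀ j, g j x = 0) (hmin : IsLocalMinOn f (feasibleSet h g) x)
    (hli : LinearIndependent ℝ fun i => fderiv ℝ (h i) x)
    (hslater : ∃ v, (∀ i, fderiv ℝ (h i) x v = 0) ∧ ∀ j, fderiv ℝ (g j) x v < 0)
    (hrank : Fintype.card ι + Fintype.card κ ≤ Set.finrank ℝ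
      (Set.range (fun i => fderiv ℝ (h i) x) ∪ Set.range fun j => fderiv ℝ (g j) x) + 1) :
    ∃ p ∈ multiplierSet (fderiv ℝ f x) (fun i => fderiv ℝ (h i) x) (fun j => fderiv ℝ (g j) x),
      ∀ d ∈ criticalSubspace h g x, 0 ≤ fderiv ℝ (fderiv ℝ f) x d d +
        lagrangeCombination (fun i => fderiv ℝ (fderiv ℝ (h i)) x d d)
          (fun j => fderiv ℝ (fderiv ℝ (g j)) x d d) p := by
  have sonc {d : E} := exists_mem_multiplierSet_hessian_nonneg (d := d) hf hh hg hhx hgx hmin hli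
    hslater
  obtain ⟨p₀, hp₀, -⟩ := sonc (map_zero _) (fun _ => map_zero _) fun _ => map_zero _
  obtain ⟨v, hhv, hgv⟩ := hslater
  let q (φ : E → ℝ) : QuadraticForm ℝ (criticalSubspace h g x) :=
    (fderiv ℝ (fderiv ℝ φ) x).toBilinForm.toQuadraticMap.comp (criticalSubspace h g x).subtype
  let Q : (ι → ℝ) × (κ → ℝ) →ᵃ[ℝ] QuadraticForm ℝ (criticalSubspace h g x) :=
    AffineMap.const ℝ _ (q f) +
      (lagrangeCombination (fun i => q (h i)) fun j => q (g j)).toAffineMap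
  have Q_apply (p : (ι → ℝ) × (κ → ℝ)) (d : criticalSubspace h g x) : Q p d =
      fderiv ℝ (fderiv ℝ f) x d d + lagrangeCombination (fun i => fderiv ℝ (fderiv ℝ (h i)) x d d)
        (fun j => fderiv ℝ (fderiv ℝ (g j)) x d d) p := by
    simp [Q, q, lagrangeCombination_apply]
  obtain ⟨p, hp, hQ⟩ := exists_mem_forall_quadraticForm_nonneg
    (isCompact_multiplierSet _ hli (l := (ContinuousLinearMap.apply ℝ ℝ v).toLinearMap) hhv hgv)
    (convex_multiplierSet _ _ _) (collinear_multiplierSet _ hrank) Q fun d => by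
      simp only [Q_apply]
      obtain ⟨hhd, hgd⟩ := mem_criticalSubspace.1 d.2
      exact sonc (fderiv_apply_eq_zero_of_mem_criticalSubspace hp₀ d.2) hhd hgd
  exact ⟨p, hp, fun d hd => Q_apply p ⟨d, hd⟩ ▸ hQ ⟨d, hd⟩⟩

end NecessaryConditions

section Lagrangian

open Filter Topology

variable {E ι κ : Type*} [Fintype ι] [Fintype κ]

/-- The Lagrangian `f + ∑ i, λ i • h i + ∑ j, μ j • g j` at the pair of multiplier vectors
`p = (λ, μ)`. -/
def lagrangian (f : E → ℝ) (h : ι → E → ℝ) (g : κ → E → ℝ) (p : (ι → ℝ) × (κ → ℝ)) : E → ℝ :=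
  f + lagrangeCombination h g p

variable [NormedAddCommGroup E] [NormedSpace ℝ E] {f : E → ℝ} {h : ι → E → ℝ} {g : κ → E → ℝ}
  {x : E} {p : (ι → ℝ) × (κ → ℝ)}

theorem fderiv_lagrangian (hf : DifferentiableAt ℝ f x) (hh : ∀ i, DifferentiableAt ℝ (h i) x)
    (hg : ∀ j, DifferentiableAt ℝ (g j) x) :
    fderiv ℝ (lagrangian f h g p) x = fderiv ℝ f x +
      lagrangeCombination (fun i => fderiv ℝ (h i) x) (fun j => fderiv ℝ (g j) x) p := by
  simp only [lagrangian, lagrangeCombination_apply]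
  exact (hf.hasFDerivAt.add <|
    (HasFDerivAt.sum fun i _ => (hh i).hasFDerivAt.const_smul _).add <|
      HasFDerivAt.sum fun j _ => (hg j).hasFDerivAt.const_smul _).fderiv

theorem fderiv_fderiv_lagrangian (hf : ContDiffAt ℝ 2 f x) (hh : ∀ i, ContDiffAt ℝ 2 (h i) x)
    (hg : ∀ j, ContDiffAt ℝ 2 (g j) x) :
    fderiv ℝ (fderiv ℝ (lagrangian f h g p)) x = fderiv ℝ (fderiv ℝ f) x +
      lagrangeCombination (fun i => fderiv ℝ (fderiv ℝ (h i)) x)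
        (fun j => fderiv ℝ (fderiv ℝ (g j)) x) p := by
  have differentiableAt_fderiv {φ : E → ℝ} (hφ : ContDiffAt ℝ 2 φ x) :
      DifferentiableAt ℝ (fderiv ℝ φ) x :=
    (hφ.fderiv_right (m := 1) (by norm_num)).differentiableAt one_ne_zero
  have eventually_differentiableAt {φ : E → ℝ} (hφ : ContDiffAt ℝ 2 φ x) :
      ∀ᶠ y in 𝓝 x, DifferentiableAt ℝ φ y :=
    (hφ.eventually (by simp)).mono fun y hy => hy.differentiableAt two_ne_zero
  have hfderiv : fderiv ℝ (lagrangian f h g p) =ᶠ[𝓝 x] fderiv ℝ f +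
      lagrangeCombination (fun i => fderiv ℝ (h i)) (fun j => fderiv ℝ (g j)) p := by
    filter_upwards [eventually_differentiableAt hf,
      eventually_all.2 fun i => eventually_differentiableAt (hh i),
      eventually_all.2 fun j => eventually_differentiableAt (hg j)] with y hfy hhy hgy
    simp [fderiv_lagrangian hfy hhy hgy, lagrangeCombination_apply]
  rw [hfderiv.fderiv_eq]
  simp only [lagrangeCombination_apply]
  exact ((differentiableAt_fderiv hf).hasFDerivAt.add <|
    (HasFDerivAt.sum fun i _ => (differentiableAt_fderiv (hh i)).hasFDerivAt.const_smul _).add <|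
      HasFDerivAt.sum fun j _ => (differentiableAt_fderiv (hg j)).hasFDerivAt.const_smul _).fderiv

end Lagrangian

theorem Lagr_eq_lagrangian {n m p : ℕ} (f : (Fin n → ℝ) → ℝ) (h : Fin m → (Fin n → ℝ) → ℝ)
    (g : Fin p → (Fin n → ℝ) → ℝ) (lam : Fin m → ℝ) (mu : Fin p → ℝ) :
    Lagr f h g lam mu = lagrangian f h g (lam, mu) := by
  ext x
  simp [Lagr, lagrangian, lagrangeCombination_apply, add_assoc]

theorem rank_Jac {n m p : ℕ} (h : Fin m → (Fin n → ℝ) → ℝ) (g : Fin p → (Fin n → ℝ) → ℝ)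
    (xs x : Fin n → ℝ) :
    (Jac h g xs x).rank = Set.finrank ℝ (Set.range (fun i => fderiv ℝ (h i) x) ∪
      Set.range fun j : {j // g j xs = 0} => fderiv ℝ (g j) x) := by
  let T : ((Fin n → ℝ) →L[ℝ] ℝ) ≃ₗ[ℝ] (Fin n → ℝ) :=
    LinearMap.toContinuousLinearMap.symm ≪≫ₗ ((Pi.basisFun ℝ (Fin n)).constr ℝ).symm
  have T_apply (φ : (Fin n → ℝ) →L[ℝ] ℝ) (k : Fin n) : T φ k = φ (Pi.single k 1) := by
    simp [T, Module.Basis.constr]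
  have hrow : Set.range (Jac h g xs x).row =
      T.toLinearMap '' (Set.range (fun i => fderiv ℝ (h i) x) ∪
        Set.range fun j : {j // g j xs = 0} => fderiv ℝ (g j) x) := by
    rw [Set.image_union, ← Set.range_comp, ← Set.range_comp, ← Set.Sum.elim_range]
    congr 1
    ext (i | j) k <;> simp [Jac, Matrix.row, T_apply]
  rw [Matrix.rank_eq_finrank_span_row, hrow, ← Submodule.map_span, LinearEquiv.finrank_map_eq,
    Set.finrank]

theorem stmt5_general {E ι κ : Type*} [NormedAddCommGroup E] [NormedSpace ℝ E] [CompleteSpace E]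
    [Fintype ι] [Fintype κ] {f : E → ℝ} {h : ι → E → ℝ} {g : κ → E → ℝ} {x : E}
    (hf : ContDiffAt ℝ 2 f x) (hh : ∀ i, ContDiffAt ℝ 2 (h i) x)
    (hg : ∀ j, ContDiffAt ℝ 2 (g j) x) (hx : x ∈ feasibleSet h g)
    (hmin : IsLocalMinOn f (feasibleSet h g) x)
    (hli : LinearIndependent ℝ fun i => fderiv ℝ (h i) x)
    (hslater : ∃ v, (∀ i, fderiv ℝ (h i) x v = 0) ∧ ∀ j, g j x = 0 → fderiv ℝ (g j) x v < 0)
    (hrank : Fintype.card ι + Fintype.card {j // g j x = 0} ≤ Set.finrank ℝ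
      (Set.range (fun i => fderiv ℝ (h i) x) ∪
        Set.range fun j : {j // g j x = 0} => fderiv ℝ (g j) x) + 1) :
    ∃ (lam : ι → ℝ) (mu : κ → ℝ), ((∀ j, 0 ≤ mu j) ∧
      fderiv ℝ (lagrangian f h g (lam, mu)) x = 0 ∧ ∀ j, mu j * g j x = 0) ∧
      ∀ d, ((∀ i, fderiv ℝ (h i) x d = 0) ∧ ∀ j, g j x = 0 → fderiv ℝ (g j) x d = 0) →
        0 ≤ iteratedFDeriv ℝ 2 (lagrangian f h g (lam, mu)) x ![d, d] := by
  obtain ⟨v, hhv, hgv⟩ := hslater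
  obtain ⟨⟨lam, mu⟩, ⟨hmu, hstat⟩, hhess⟩ := exists_mem_multiplierSet_forall_hessian_nonneg hf hh
    (fun j : {j // g j x = 0} => hg j) hx.1 Subtype.prop
    (isLocalMinOn_feasibleSet_active (fun j => (hg j).continuousAt) hx.2 hmin) hli
    ⟨v, hhv, fun j => hgv j j.2⟩ hrank
  have hextend {j : κ} (hj : g j x ≠ 0) : Function.extend Subtype.val mu 0 j = 0 :=
    Function.extend_apply' _ _ _ fun ⟨k, hk⟩ => hj (hk ▸ k.2)
  refine ⟨lam, Function.extend Subtype.val mu 0, ⟨fun j => ?_, ?_, fun j => ?_⟩, fun d hd => ?_⟩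
  · by_cases hj : g j x = 0
    · exact (Subtype.val_injective.extend_apply mu 0 ⟨j, hj⟩).ge.trans' (hmu ⟨j, hj⟩)
    · exact (hextend hj).ge
  · rw [fderiv_lagrangian (hf.differentiableAt two_ne_zero)
      (fun i => (hh i).differentiableAt two_ne_zero) fun j => (hg j).differentiableAt two_ne_zero,
      lagrangeCombination_extend Subtype.val_injective]
    exact hstat
  · by_cases hj : g j x = 0
    · rw [hj, mul_zero]
    · rw [hextend hj, zero_mul]
  · rw [iteratedFDeriv_two_apply, fderiv_fderiv_lagrangian hf hh hg,
      lagrangeCombination_extend Subtype.val_injective]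
    have := hhess d (mem_criticalSubspace.2 ⟨hd.1, fun j => hd.2 j j.2⟩)
    simpa [lagrangeCombination_apply] using this

/-- Baccari–Trad: MFCQ plus rank `J(x*) = m + q - 1` imply WSOC at a local
minimizer. -/
theorem stmt5 {n m p : ℕ} (f : (Fin n → ℝ) → ℝ) (h : Fin m → (Fin n → ℝ) → ℝ)
    (g : Fin p → (Fin n → ℝ) → ℝ)
    (hf : ContDiff ℝ 2 f) (hh : ∀ i, ContDiff ℝ 2 (h i)) (hg : ∀ j, ContDiff ℝ 2 (g j))
    (xs : Fin n → ℝ) (hfeas : Feas h g xs)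
    (hmin : IsLocalMinOn f {x | Feas h g x} xs)
    (hmfcq : MFCQ h g xs)
    (hrank : (Jac h g xs xs).rank + 1 = m + Fintype.card {j : Fin p // g j xs = 0}) :
    ∃ (lam : Fin m → ℝ) (mu : Fin p → ℝ), IsLagMult f h g xs lam mu ∧
      ∀ d, critSub h g xs d → 0 ≤ hessQ (Lagr f h g lam mu) xs d := by
  simpa only [IsLagMult, critSub, hessQ, Lagr_eq_lagrangian] using
    stmt5_general hf.contDiffAt (fun i => (hh i).contDiffAt) (fun j => (hg j).contDiffAt) hfeas
      hmin hmfcq.1 hmfcq.2 (by rw [← rank_Jac, hrank, Fintype.card_fin])
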